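/- Let ρ > −1/2 and α > ρ + 1/2 be real numbers. There exists a constant C = C(α, ρ) with the following property. Let μ be a finite Borel measure on [0,∞) and let g : [0,∞) → ℂ be a bounded measurable function; for β ∈ {ρ, α} and t > 0 set s_β(t) = ∫_{[0,∞)} (1 − λ/t²)₊^β g(λ) dμ(λ), where (y)₊^β is interpreted as 0 when y ≤ 0. Then for every R > 0, |s_α(R)|² ≤ C · (1/R) ∫_0^R |s_ρ(t)|² dt. -/

import Mathlib

open MeasureTheory

/-- The Bochner–Riesz type mean of order `β` at level `t` of a bounded function `g`
against a measure `μ` on `[0,∞)`: `s_β(t) = ∫ (1 - λ/t²)₊^β g(λ) dμ(λ)`, with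
`(y)₊^β` interpreted as `0` when `y ≤ 0`. -/
noncomputable def riesMean (μ : Measure ℝ) (g : ℝ → ℂ) (β t : ℝ) : ℂ :=
  ∫ l, ((if 0 < 1 - l / t ^ 2 then (1 - l / t ^ 2) ^ β else 0 : ℝ) : ℂ) * g l ∂μ

/-!
The substitution `x = t² - l` turns a beta integral into the averaging identity
`∫₀ᴿ w(t) (1 - l/t²)₊^ρ dt = c R^(2α) (1 - l/R²)₊^α`, where `w(t) = (R² - t²)^(α-ρ-1) t^(2ρ+1)`.
By Fubini, `c R^(2α) s_α(R) = ∫₀ᴿ w(t) s_ρ(t) dt`, and Cauchy–Schwarz in `t` gives the inequality,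
since `∫₀ᴿ w² = c' R^(4α-1)`: this integral is the identity again, at `l = 0` and other orders.

For `ρ < 0` the kernel is unbounded, and `s_ρ ∈ L²(0, R)` has to be proved. By Cauchy–Schwarz in `l`
it is enough to bound `∫₀ᴿ (1 - l/t²)₊^(2ρ) dt` uniformly in `l ≥ 0`; since `2ρ > -1`, this too
follows from the averaging identity.
-/

open Set Function
open ProbabilityTheory (beta beta_pos)

section IntegralOperators

variable {X Y E : Type*} [MeasurableSpace X] [MeasurableSpace Y]
  [NormedAddCommGroup E] [NormedSpace ℝ E] {ν : Measure X} {μ : Measure Y}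

lemma sq_norm_integral_smul_le {w : X → ℝ} {f : X → E} (hw : MemLp w 2 ν) (hf : MemLp f 2 ν) :
    ‖∫ x, w x • f x ∂ν‖ ^ 2 ≤ (∫ x, w x ^ 2 ∂ν) * ∫ x, ‖f x‖ ^ 2 ∂ν := by
  have holder : ∫ x, ‖w x‖ * ‖f x‖ ∂ν ≤ √(∫ x, w x ^ 2 ∂ν) * √(∫ x, ‖f x‖ ^ 2 ∂ν) := by
    simpa [Real.sqrt_eq_rpow] using
      integral_mul_norm_le_Lp_mul_Lq (f := w) (g := fun x ↦ ‖f x‖) Real.HolderConjugate.two_two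
        (by simpa using hw) (by simpa using hf.norm)
  have norm_le : ‖∫ x, w x • f x ∂ν‖ ≤ √(∫ x, w x ^ 2 ∂ν) * √(∫ x, ‖f x‖ ^ 2 ∂ν) :=
    (norm_integral_le_integral_norm _).trans (by simpa only [norm_smul] using holder)
  have := pow_le_pow_left₀ (norm_nonneg _) norm_le 2
  rwa [mul_pow, Real.sq_sqrt (integral_nonneg fun _ ↦ sq_nonneg _),
    Real.sq_sqrt (integral_nonneg fun _ ↦ sq_nonneg _)] at this

lemma sq_norm_integral_smul_le_integral_sq_mul {w : X → ℝ} {f : X → E}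
    (hw : AEStronglyMeasurable w ν) (hwf : Integrable (fun x ↦ w x ^ 2 * ‖f x‖) ν)
    (hf : Integrable f ν) :
    ‖∫ x, w x • f x ∂ν‖ ^ 2 ≤ (∫ x, w x ^ 2 * ‖f x‖ ∂ν) * ∫ x, ‖f x‖ ∂ν := by
  have sqrt_meas : AEStronglyMeasurable (fun x ↦ √‖f x‖) ν :=
    Real.continuous_sqrt.comp_aestronglyMeasurable hf.1.norm
  have sqrt_memLp : MemLp (fun x ↦ √‖f x‖) 2 ν :=
    (memLp_two_iff_integrable_sq sqrt_meas).2 (by simpa [Real.sq_sqrt] using hf.norm)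
  have mul_sqrt_memLp : MemLp (fun x ↦ ‖w x‖ * √‖f x‖) 2 ν :=
    (memLp_two_iff_integrable_sq (hw.norm.mul sqrt_meas)).2
      (by simpa [mul_pow, Real.sq_sqrt] using hwf)
  have norm_le : ‖∫ x, w x • f x ∂ν‖ ≤ ‖∫ x, (‖w x‖ * √‖f x‖) • √‖f x‖ ∂ν‖ := by
    simp only [smul_eq_mul, mul_assoc, Real.mul_self_sqrt (norm_nonneg _)]
    refine (norm_integral_le_integral_norm _).trans (le_trans (le_of_eq ?_) (le_abs_self _))
    simp only [norm_smul]
  have := (pow_le_pow_left₀ (norm_nonneg _) norm_le 2).trans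
    (sq_norm_integral_smul_le mul_sqrt_memLp sqrt_memLp)
  simpa [mul_pow, Real.sq_sqrt] using this

variable [SFinite ν] [SFinite μ] {k : X → Y → ℝ} {C : ℝ} {g : Y → E}

lemma integrable_prod_kernel_smul (hk : AEStronglyMeasurable (uncurry k) (ν.prod μ))
    (k_int : ∀ᵐ y ∂μ, Integrable (k · y) ν) (k_le : ∀ᵐ y ∂μ, ∫ x, ‖k x y‖ ∂ν ≤ C)
    (hg : Integrable g μ) :
    Integrable (fun p : X × Y ↦ k p.1 p.2 • g p.2) (ν.prod μ) := by
  have meas : AEStronglyMeasurable (fun p : X × Y ↦ k p.1 p.2 • g p.2) (ν.prod μ) :=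
    hk.smul hg.1.comp_snd
  refine (integrable_prod_iff' meas).2 ⟨?_, ?_⟩
  · filter_upwards [k_int] with y hy using hy.smul_const (g y)
  · refine (hg.norm.const_mul C).mono' meas.norm.prod_swap.integral_prod_right' ?_
    filter_upwards [k_le] with y hy
    rw [Real.norm_of_nonneg (integral_nonneg fun _ ↦ norm_nonneg _)]
    simp only [norm_smul, integral_mul_const]
    gcongr

lemma memLp_two_integral_kernel_smul (hk : AEStronglyMeasurable (uncurry k) (ν.prod μ))
    (k_int : ∀ᵐ y ∂μ, Integrable (k · y ^ 2) ν) (k_le : ∀ᵐ y ∂μ, ∫ x, k x y ^ 2 ∂ν ≤ C)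
    (hg : Integrable g μ) :
    MemLp (fun x ↦ ∫ y, k x y • g y ∂μ) 2 ν := by
  have meas : AEStronglyMeasurable (fun x ↦ ∫ y, k x y • g y ∂μ) ν :=
    (hk.smul hg.1.comp_snd).integral_prod_right'
  have sq_meas : AEStronglyMeasurable (uncurry fun x y ↦ k x y ^ 2) (ν.prod μ) := hk.pow 2
  have sq_int : Integrable (fun p : X × Y ↦ k p.1 p.2 ^ 2 * ‖g p.2‖) (ν.prod μ) :=
    integrable_prod_kernel_smul sq_meas k_int (by simpa using k_le) hg.norm
  refine (memLp_two_iff_integrable_sq_norm meas).2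
    ((sq_int.integral_prod_left.mul_const (∫ y, ‖g y‖ ∂μ)).mono' (meas.norm.pow 2) ?_)
  filter_upwards [sq_int.prod_right_ae, hk.prodMk_left] with x hx hkx
  rw [Real.norm_of_nonneg (sq_nonneg _)]
  exact sq_norm_integral_smul_le_integral_sq_mul hkx hx hg

end IntegralOperators

section BetaIntegral

lemma integral_rpow_mul_sub_rpow {a b c : ℝ} (ha : 0 < a) (hb : 0 < b) (hc : 0 < c) :
    ∫ x in Ioo 0 c, x ^ (a - 1) * (c - x) ^ (b - 1) = c ^ (a + b - 1) * beta a b := by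
  have beta_eq : Complex.betaIntegral a b = beta a b := by
    rw [Complex.betaIntegral_eq_Gamma_mul_div _ _ (by simpa) (by simpa), beta]
    push_cast [← Complex.Gamma_ofReal]
    rfl
  apply Complex.ofReal_injective
  rw [← integral_Ioc_eq_integral_Ioo, ← intervalIntegral.integral_of_le hc.le,
    ← intervalIntegral.integral_ofReal]
  push_cast [Complex.ofReal_cpow hc.le]
  rw [← beta_eq, ← Complex.betaIntegral_scaled _ _ hc]
  refine intervalIntegral.integral_congr fun x hx ↦ ?_
  rw [uIcc_of_le hc.le] at hx
  push_cast [Complex.ofReal_cpow hx.1, Complex.ofReal_cpow (sub_nonneg.2 hx.2)]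
  rfl

lemma integral_comp_sq_sub_sq {E : Type*} [NormedAddCommGroup E] [NormedSpace ℝ E] {s R : ℝ}
    (hs : 0 ≤ s) (hsR : s ≤ R) (f : ℝ → E) :
    ∫ t in Ioo s R, (2 * t) • f (t ^ 2 - s ^ 2) = ∫ x in Ioo 0 (R ^ 2 - s ^ 2), f x := by
  have mono : StrictMonoOn (fun t ↦ t ^ 2 - s ^ 2) (Icc s R) := fun x hx y _ hxy ↦
    sub_lt_sub_right (pow_lt_pow_left₀ hxy (hs.trans hx.1) two_ne_zero) _
  have image : (fun t ↦ t ^ 2 - s ^ 2) '' Ioo s R = Ioo 0 (R ^ 2 - s ^ 2) := by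
    simpa using ContinuousOn.image_Ioo_of_strictMonoOn hsR (by fun_prop) mono
  have deriv (t : ℝ) : HasDerivWithinAt (fun t ↦ t ^ 2 - s ^ 2) (2 * t) (Ioo s R) t := by
    simpa using ((hasDerivAt_pow 2 t).sub_const (s ^ 2)).hasDerivWithinAt
  rw [← image, integral_image_eq_integral_abs_deriv_smul measurableSet_Ioo (fun t _ ↦ deriv t)
    (mono.injOn.mono Ioo_subset_Icc_self)]
  refine setIntegral_congr_fun measurableSet_Ioo fun t ht ↦ ?_
  have : 0 ≤ 2 * t := by linarith [ht.1]
  simp only [abs_of_nonneg this]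

end BetaIntegral

section RieszKernel

/-- The kernel `(1 - l/t²)₊^β` of the Riesz mean of order `β` at level `t`; the truncated power
vanishes off `l < t²` for every order, also for `β ≤ 0`. -/
noncomputable def rieszKernel (β t l : ℝ) : ℝ :=
  if 0 < 1 - l / t ^ 2 then (1 - l / t ^ 2) ^ β else 0

/-- The weight `(R² - t²)^(α-ρ-1) t^(2ρ+1)` on `(0, R)` against which the Riesz means of order `ρ`
average to the Riesz mean of order `α` at level `R`. -/
noncomputable def rieszWeight (ρ α R t : ℝ) : ℝ :=
  (R ^ 2 - t ^ 2) ^ (α - ρ - 1) * t ^ (2 * ρ + 1)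

variable {ρ α β σ R t l : ℝ}

lemma rieszKernel_nonneg (β t l : ℝ) : 0 ≤ rieszKernel β t l := by
  unfold rieszKernel
  split_ifs with h
  · exact Real.rpow_nonneg h.le β
  · exact le_rfl

@[simp]
lemma rieszKernel_zero_right (β t : ℝ) : rieszKernel β t 0 = 1 := by
  simp [rieszKernel]

lemma rieszKernel_sq (β t l : ℝ) : rieszKernel β t l ^ 2 = rieszKernel (2 * β) t l := by
  unfold rieszKernel
  split_ifs with h
  · rw [← Real.rpow_mul_natCast h.le, Nat.cast_ofNat, mul_comm]
  · exact zero_pow two_ne_zero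

lemma rieszKernel_anti (hl : 0 ≤ l) (h : σ ≤ β) : rieszKernel β t l ≤ rieszKernel σ t l := by
  unfold rieszKernel
  split_ifs with hpos
  · exact Real.rpow_le_rpow_of_exponent_ge hpos (sub_le_self 1 (by positivity)) h
  · exact le_rfl

lemma rieszKernel_le_one (hβ : 0 ≤ β) (hl : 0 ≤ l) : rieszKernel β t l ≤ 1 := by
  unfold rieszKernel
  split_ifs with h
  · exact Real.rpow_le_one h.le (sub_le_self 1 (by positivity)) hβ
  · exact zero_le_one

lemma rieszKernel_eq_zero (ht : 0 < t) (h : t ^ 2 ≤ l) : rieszKernel β t l = 0 :=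
  if_neg (by rw [sub_pos, not_lt, one_le_div (by positivity)]; exact h)

lemma rieszKernel_eq_div (ht : 0 < t) (h : l < t ^ 2) :
    rieszKernel β t l = (t ^ 2 - l) ^ β / t ^ (2 * β) := by
  have one_sub : 1 - l / t ^ 2 = (t ^ 2 - l) / t ^ 2 := by field_simp
  have pos : 0 < t ^ 2 - l := sub_pos.2 h
  rw [rieszKernel, one_sub, if_pos (by positivity), Real.div_rpow pos.le (by positivity),
    Real.rpow_mul ht.le, Real.rpow_two]

@[fun_prop]
lemma measurable_rieszKernel (β : ℝ) : Measurable (uncurry (rieszKernel β)) :=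
  Measurable.ite (measurableSet_lt measurable_const (by fun_prop)) (by fun_prop) (by fun_prop)

@[fun_prop]
lemma measurable_rieszWeight (ρ α R : ℝ) : Measurable (rieszWeight ρ α R) := by
  unfold rieszWeight
  fun_prop

lemma sq_sub_sq_pos_of_mem_Ioo (ht : t ∈ Ioo 0 R) : 0 < R ^ 2 - t ^ 2 :=
  sub_pos.2 (pow_lt_pow_left₀ ht.2 ht.1.le two_ne_zero)

lemma rieszWeight_nonneg (ht : t ∈ Ioo 0 R) : 0 ≤ rieszWeight ρ α R t :=
  mul_nonneg (Real.rpow_nonneg (sq_sub_sq_pos_of_mem_Ioo ht).le _) (Real.rpow_nonneg ht.1.le _)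

lemma rieszWeight_sq (ht : t ∈ Ioo 0 R) :
    rieszWeight ρ α R t ^ 2 = rieszWeight (2 * ρ + 1 / 2) (2 * α - 1 / 2) R t := by
  rw [rieszWeight, rieszWeight, mul_pow, ← Real.rpow_mul_natCast (sq_sub_sq_pos_of_mem_Ioo ht).le,
    ← Real.rpow_mul_natCast ht.1.le]
  congr 2 <;> push_cast <;> ring

lemma rieszWeight_mul_rieszKernel (ht : 0 < t) (h : l < t ^ 2) :
    rieszWeight ρ α R t * rieszKernel ρ t l
      = t * ((t ^ 2 - l) ^ ρ * (R ^ 2 - t ^ 2) ^ (α - ρ - 1)) := by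
  have : 0 < t ^ (2 * ρ) := Real.rpow_pos_of_pos ht _
  rw [rieszWeight, rieszKernel_eq_div ht h, Real.rpow_add_one ht.ne']
  field_simp

lemma integral_rieszWeight_mul_rieszKernel (hρ : -1 < ρ) (hα : ρ < α) (hR : 0 < R) (hl : 0 ≤ l) :
    ∫ t in Ioo 0 R, rieszWeight ρ α R t * rieszKernel ρ t l
      = beta (ρ + 1) (α - ρ) / 2 * R ^ (2 * α) * rieszKernel α R l := by
  rcases le_or_gt (R ^ 2) l with hRl | hlR
  · rw [rieszKernel_eq_zero hR hRl, mul_zero]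
    refine setIntegral_eq_zero_of_forall_eq_zero fun t ht ↦ ?_
    have := sq_sub_sq_pos_of_mem_Ioo ht
    rw [rieszKernel_eq_zero ht.1 (by linarith), mul_zero]
  obtain ⟨s, hs, rfl⟩ : ∃ s, 0 ≤ s ∧ s ^ 2 = l := ⟨√l, Real.sqrt_nonneg l, Real.sq_sqrt hl⟩
  have hsR : s < R := lt_of_pow_lt_pow_left₀ 2 hR.le hlR
  have vanishing : ∀ t ∈ Ioo 0 R \ Ioo s R, rieszWeight ρ α R t * rieszKernel ρ t (s ^ 2) = 0 := by
    intro t ⟨ht, hts⟩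
    have : t ≤ s := not_lt.1 fun h ↦ hts ⟨h, ht.2⟩
    rw [rieszKernel_eq_zero ht.1 (pow_le_pow_left₀ ht.1.le this 2), mul_zero]
  calc ∫ t in Ioo 0 R, rieszWeight ρ α R t * rieszKernel ρ t (s ^ 2)
      = ∫ t in Ioo s R, rieszWeight ρ α R t * rieszKernel ρ t (s ^ 2) :=
        setIntegral_eq_of_subset_of_forall_sdiff_eq_zero measurableSet_Ioo
          (Ioo_subset_Ioo_left hs) vanishing
    _ = ∫ t in Ioo s R, (2 * t) •
          (2⁻¹ * ((t ^ 2 - s ^ 2) ^ ρ * (R ^ 2 - s ^ 2 - (t ^ 2 - s ^ 2)) ^ (α - ρ - 1))) := by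
        refine setIntegral_congr_fun measurableSet_Ioo fun t ht ↦ ?_
        simp only [rieszWeight_mul_rieszKernel (hs.trans_lt ht.1)
          (pow_lt_pow_left₀ ht.1 hs two_ne_zero), sub_sub_sub_cancel_right, smul_eq_mul]
        ring
    _ = ∫ x in Ioo 0 (R ^ 2 - s ^ 2), 2⁻¹ * (x ^ ρ * (R ^ 2 - s ^ 2 - x) ^ (α - ρ - 1)) :=
        integral_comp_sq_sub_sq hs hsR.le
          fun x ↦ 2⁻¹ * (x ^ ρ * (R ^ 2 - s ^ 2 - x) ^ (α - ρ - 1))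
    _ = 2⁻¹ * ((R ^ 2 - s ^ 2) ^ α * beta (ρ + 1) (α - ρ)) := by
        have := integral_rpow_mul_sub_rpow (a := ρ + 1) (b := α - ρ) (by linarith) (by linarith)
          (sub_pos.2 hlR)
        rw [add_sub_cancel_right, show ρ + 1 + (α - ρ) - 1 = α by ring] at this
        rw [integral_const_mul, this]
    _ = beta (ρ + 1) (α - ρ) / 2 * R ^ (2 * α) * rieszKernel α R (s ^ 2) := by
        have : 0 < R ^ (2 * α) := Real.rpow_pos_of_pos hR _
        rw [rieszKernel_eq_div hR hlR]
        field_simp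

lemma integrableOn_rieszWeight_mul_rieszKernel (hρ : -1 < ρ) (hα : ρ < α) (hR : 0 < R)
    (hl : 0 ≤ l) :
    IntegrableOn (fun t ↦ rieszWeight ρ α R t * rieszKernel ρ t l) (Ioo 0 R) := by
  rcases le_or_gt (R ^ 2) l with hRl | hlR
  · refine integrableOn_zero.congr_fun (fun t ht ↦ ?_) measurableSet_Ioo
    have := sq_sub_sq_pos_of_mem_Ioo ht
    rw [rieszKernel_eq_zero ht.1 (by linarith), mul_zero]
  · -- A non-integrable function would have Bochner integral `0`.
    refine Integrable.of_integral_ne_zero ?_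
    have hbeta : 0 < beta (ρ + 1) (α - ρ) := beta_pos (by linarith) (by linarith)
    have : 0 < R ^ 2 - l := sub_pos.2 hlR
    rw [integral_rieszWeight_mul_rieszKernel hρ hα hR hl, rieszKernel_eq_div hR hlR]
    positivity

lemma memLp_two_rieszWeight (hρ : -(1 / 2) < ρ) (hα : ρ + 1 / 2 < α) (hR : 0 < R) :
    MemLp (rieszWeight ρ α R) 2 (volume.restrict (Ioo 0 R)) := by
  refine (memLp_two_iff_integrable_sq (by fun_prop)).2 ?_
  have := integrableOn_rieszWeight_mul_rieszKernel (ρ := 2 * ρ + 1 / 2) (α := 2 * α - 1 / 2)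
    (by linarith) (by linarith) hR le_rfl
  simp only [rieszKernel_zero_right, mul_one] at this
  exact this.congr_fun (fun t ht ↦ (rieszWeight_sq ht).symm) measurableSet_Ioo

lemma integral_rieszWeight_sq (hρ : -(1 / 2) < ρ) (hα : ρ + 1 / 2 < α) (hR : 0 < R) :
    ∫ t in Ioo 0 R, rieszWeight ρ α R t ^ 2
      = beta (2 * ρ + 3 / 2) (2 * (α - ρ) - 1) / 2 * R ^ (4 * α - 1) := by
  have := integral_rieszWeight_mul_rieszKernel (ρ := 2 * ρ + 1 / 2) (α := 2 * α - 1 / 2)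
    (by linarith) (by linarith) hR le_rfl
  simp only [rieszKernel_zero_right, mul_one] at this
  rw [setIntegral_congr_fun measurableSet_Ioo fun t ht ↦ rieszWeight_sq ht, this]
  congr 3 <;> ring

-- For `σ ≤ -1/2` the weight `t ^ (2σ+1)` is at least `R ^ (2σ+1)`, and larger orders only
-- decrease the kernel.
lemma rieszKernel_le_rieszWeight_mul (hl : 0 ≤ l) (hσβ : σ ≤ β) (hσ : σ ≤ -(1 / 2))
    (ht : t ∈ Ioo 0 R) :
    rieszKernel β t l
      ≤ R ^ (-(2 * σ + 1)) * (rieszWeight σ (σ + 1) R t * rieszKernel σ t l) := by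
  have hR : 0 < R := ht.1.trans ht.2
  have one_le : 1 ≤ R ^ (-(2 * σ + 1)) * t ^ (2 * σ + 1) := by
    rw [Real.rpow_neg hR.le, inv_mul_eq_div, one_le_div (Real.rpow_pos_of_pos hR _)]
    exact Real.rpow_le_rpow_of_nonpos ht.1 ht.2.le (by linarith)
  calc rieszKernel β t l
      ≤ rieszKernel σ t l := rieszKernel_anti hl hσβ
    _ ≤ R ^ (-(2 * σ + 1)) * t ^ (2 * σ + 1) * rieszKernel σ t l :=
        le_mul_of_one_le_left (rieszKernel_nonneg _ _ _) one_le
    _ = R ^ (-(2 * σ + 1)) * (rieszWeight σ (σ + 1) R t * rieszKernel σ t l) := by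
        rw [rieszWeight, add_sub_cancel_left, sub_self, Real.rpow_zero, one_mul, mul_assoc]

lemma exists_integral_rieszKernel_le (hβ : -1 < β) (hR : 0 < R) :
    ∃ C, ∀ l, 0 ≤ l →
      IntegrableOn (rieszKernel β · l) (Ioo 0 R) ∧ ∫ t in Ioo 0 R, rieszKernel β t l ≤ C := by
  set σ := min β (-(1 / 2))
  have neg_one_lt : -1 < σ := lt_min hβ (by norm_num)
  have hbeta : 0 < beta (σ + 1) (σ + 1 - σ) := beta_pos (by linarith) (by linarith)
  refine ⟨R ^ (-(2 * σ + 1)) * (beta (σ + 1) (σ + 1 - σ) / 2 * R ^ (2 * (σ + 1))),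
    fun l hl ↦ ?_⟩
  have dominated (t : ℝ) (ht : t ∈ Ioo 0 R) :=
    rieszKernel_le_rieszWeight_mul hl (min_le_left β _) (min_le_right _ (-(1 / 2))) ht
  have dominating_int := (integrableOn_rieszWeight_mul_rieszKernel neg_one_lt (lt_add_one σ) hR
    hl).const_mul (R ^ (-(2 * σ + 1)))
  have kernel_int : IntegrableOn (rieszKernel β · l) (Ioo 0 R) := by
    refine dominating_int.mono' (by fun_prop) ?_
    filter_upwards [ae_restrict_mem measurableSet_Ioo] with t ht
    rw [Real.norm_of_nonneg (rieszKernel_nonneg _ _ _)]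
    exact dominated t ht
  refine ⟨kernel_int,
    (setIntegral_mono_on kernel_int dominating_int measurableSet_Ioo dominated).trans ?_⟩
  rw [integral_const_mul, integral_rieszWeight_mul_rieszKernel neg_one_lt (lt_add_one σ) hR hl]
  exact mul_le_mul_of_nonneg_left
    (mul_le_of_le_one_right (by positivity) (rieszKernel_le_one (by linarith) hl)) (by positivity)

end RieszKernel

section RieszMean

variable {μ : Measure ℝ} {g : ℝ → ℂ} {ρ α R : ℝ}

lemma riesMean_eq_integral_rieszKernel (μ : Measure ℝ) (g : ℝ → ℂ) (β t : ℝ) :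
    riesMean μ g β t = ∫ l, rieszKernel β t l • g l ∂μ := rfl

lemma riesMean_restrict_Iio {t : ℝ} (ht : 0 < t) (htR : t ≤ R) (β : ℝ) :
    riesMean (μ.restrict (Iio (R ^ 2))) g β t = riesMean μ g β t := by
  simp only [riesMean_eq_integral_rieszKernel]
  refine setIntegral_eq_integral_of_forall_compl_eq_zero fun l hl ↦ ?_
  rw [rieszKernel_eq_zero ht ((pow_le_pow_left₀ ht.le htR 2).trans (not_lt.1 hl)), zero_smul]

variable [SFinite μ]

lemma memLp_two_riesMean (hμ : ∀ᵐ l ∂μ, 0 ≤ l) (hg : Integrable g μ) (hρ : -(1 / 2) < ρ)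
    (hR : 0 < R) :
    MemLp (riesMean μ g ρ) 2 (volume.restrict (Ioo 0 R)) := by
  obtain ⟨C, hC⟩ := exists_integral_rieszKernel_le (show -1 < 2 * ρ by linarith) hR
  refine memLp_two_integral_kernel_smul (k := rieszKernel ρ) (C := C)
    (measurable_rieszKernel ρ).aestronglyMeasurable ?_ ?_ hg
  all_goals
    simp only [rieszKernel_sq]
    filter_upwards [hμ] with l hl
  · exact (hC l hl).1
  · exact (hC l hl).2

lemma integral_rieszWeight_smul_riesMean (hμ : ∀ᵐ l ∂μ, 0 ≤ l) (hg : Integrable g μ)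
    (hρ : -1 < ρ) (hα : ρ < α) (hα₀ : 0 ≤ α) (hR : 0 < R) :
    ∫ t in Ioo 0 R, rieszWeight ρ α R t • riesMean μ g ρ t
      = (beta (ρ + 1) (α - ρ) / 2 * R ^ (2 * α)) • riesMean μ g α R := by
  set c := beta (ρ + 1) (α - ρ) / 2 * R ^ (2 * α)
  have hbeta : 0 < beta (ρ + 1) (α - ρ) := beta_pos (by linarith) (by linarith)
  have norm_integral_le : ∀ᵐ l ∂μ,
      ∫ t in Ioo 0 R, ‖rieszWeight ρ α R t * rieszKernel ρ t l‖ ≤ c := by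
    filter_upwards [hμ] with l hl
    rw [setIntegral_congr_fun measurableSet_Ioo fun t ht ↦ Real.norm_of_nonneg
      (mul_nonneg (rieszWeight_nonneg ht) (rieszKernel_nonneg ρ t l)),
      integral_rieszWeight_mul_rieszKernel hρ hα hR hl]
    exact mul_le_of_le_one_right (by positivity) (rieszKernel_le_one hα₀ hl)
  have prod_int : Integrable
      (uncurry fun t l ↦ (rieszWeight ρ α R t * rieszKernel ρ t l) • g l)
      ((volume.restrict (Ioo 0 R)).prod μ) := by
    have meas : Measurable (uncurry fun t l ↦ rieszWeight ρ α R t * rieszKernel ρ t l) :=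
      ((measurable_rieszWeight ρ α R).comp measurable_fst).mul (measurable_rieszKernel ρ)
    refine integrable_prod_kernel_smul meas.aestronglyMeasurable ?_ norm_integral_le hg
    filter_upwards [hμ] with l hl using integrableOn_rieszWeight_mul_rieszKernel hρ hα hR hl
  calc ∫ t in Ioo 0 R, rieszWeight ρ α R t • riesMean μ g ρ t
      = ∫ t in Ioo 0 R, ∫ l, (rieszWeight ρ α R t * rieszKernel ρ t l) • g l ∂μ := by
        simp only [riesMean_eq_integral_rieszKernel, ← integral_smul, smul_smul]
    _ = ∫ l, (∫ t in Ioo 0 R, rieszWeight ρ α R t * rieszKernel ρ t l) • g l ∂μ := by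
        simp only [integral_integral_swap prod_int, integral_smul_const]
    _ = ∫ l, c • rieszKernel α R l • g l ∂μ := by
        refine integral_congr_ae ?_
        filter_upwards [hμ] with l hl
        rw [integral_rieszWeight_mul_rieszKernel hρ hα hR hl, smul_smul]
    _ = c • riesMean μ g α R := by rw [integral_smul, riesMean_eq_integral_rieszKernel]

end RieszMean

/-- The constant in the Stein–Wainger inequality: the ratio of `∫ w²` to the square of the
constant in the averaging identity, where `w` is the weight `rieszWeight ρ α R`, up to powers
of `R`. -/
noncomputable def steinWaingerConst (ρ α : ℝ) : ℝ :=
  2 * beta (2 * ρ + 3 / 2) (2 * (α - ρ) - 1) / beta (ρ + 1) (α - ρ) ^ 2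

lemma steinWaingerConst_pos {ρ α : ℝ} (hρ : -(1 / 2) < ρ) (hα : ρ + 1 / 2 < α) :
    0 < steinWaingerConst ρ α := by
  have := beta_pos (α := 2 * ρ + 3 / 2) (β := 2 * (α - ρ) - 1) (by linarith) (by linarith)
  have := beta_pos (α := ρ + 1) (β := α - ρ) (by linarith) (by linarith)
  unfold steinWaingerConst
  positivity

lemma sq_norm_riesMean_le {ρ α R : ℝ} (hρ : -(1 / 2) < ρ) (hα : ρ + 1 / 2 < α) (hR : 0 < R)
    {μ : Measure ℝ} [SFinite μ] (hμ : ∀ᵐ l ∂μ, 0 ≤ l) {g : ℝ → ℂ} (hg : Integrable g μ) :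
    ‖riesMean μ g α R‖ ^ 2
      ≤ steinWaingerConst ρ α * (1 / R) * ∫ t in Ioo 0 R, ‖riesMean μ g ρ t‖ ^ 2 := by
  have hbeta := beta_pos (α := ρ + 1) (β := α - ρ) (by linarith) (by linarith)
  have cauchy_schwarz := sq_norm_integral_smul_le (memLp_two_rieszWeight hρ hα hR)
    (memLp_two_riesMean hμ hg hρ hR)
  rw [integral_rieszWeight_smul_riesMean hμ hg (by linarith) (by linarith) (by linarith) hR,
    integral_rieszWeight_sq hρ hα hR, norm_smul, Real.norm_of_nonneg (by positivity),
    mul_pow] at cauchy_schwarz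
  refine ((le_div_iff₀' (by positivity)).2 cauchy_schwarz).trans_eq ?_
  have rpow_sq : R ^ (4 * α - 1) * R = (R ^ (2 * α)) ^ 2 := by
    rw [← Real.rpow_add_one hR.ne', ← Real.rpow_mul_natCast hR.le]
    congr 1
    push_cast
    ring
  rw [steinWaingerConst, mul_pow, ← rpow_sq]
  have : 0 < R ^ (4 * α - 1) := Real.rpow_pos_of_pos hR _
  field_simp

theorem stein_wainger_scalar_general {ρ α R : ℝ} (hρ : -(1 / 2) < ρ) (hα : ρ + 1 / 2 < α)
    (hR : 0 < R) {μ : Measure ℝ} [SFinite μ] (hμ : μ (Iio 0) = 0) {g : ℝ → ℂ}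
    (hg : IntegrableOn g (Iio (R ^ 2)) μ) :
    ‖riesMean μ g α R‖ ^ 2
      ≤ steinWaingerConst ρ α * (1 / R) * ∫ t in (0 : ℝ)..R, ‖riesMean μ g ρ t‖ ^ 2 := by
  have nonneg : ∀ᵐ l ∂μ.restrict (Iio (R ^ 2)), 0 ≤ l :=
    ae_restrict_of_ae (by simpa using measure_eq_zero_iff_ae_notMem.1 hμ)
  have := sq_norm_riesMean_le hρ hα hR nonneg hg
  rwa [riesMean_restrict_Iio hR le_rfl, setIntegral_congr_fun measurableSet_Ioo fun t ht ↦
    by rw [riesMean_restrict_Iio ht.1 ht.2.le], ← integral_Ioc_eq_integral_Ioo,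
    ← intervalIntegral.integral_of_le hR.le] at this

theorem stein_wainger_scalar (ρ α : ℝ) (hρ : -(1 / 2) < ρ) (hα : ρ + 1 / 2 < α) :
    ∃ C : ℝ, 0 < C ∧ ∀ μ : Measure ℝ, IsFiniteMeasure μ → μ (Set.Iio 0) = 0 →
      ∀ g : ℝ → ℂ, Measurable g → (∃ M : ℝ, ∀ l : ℝ, ‖g l‖ ≤ M) →
      ∀ R : ℝ, 0 < R →
        ‖riesMean μ g α R‖ ^ 2
          ≤ C * (1 / R) * ∫ t in (0 : ℝ)..R, ‖riesMean μ g ρ t‖ ^ 2 :=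
  ⟨steinWaingerConst ρ α, steinWaingerConst_pos hρ hα, fun _ _ hμ _ hg ⟨M, hM⟩ _ hR ↦
    stein_wainger_scalar_general hρ hα hR hμ
      (Integrable.of_bound hg.aestronglyMeasurable M (.of_forall hM)).integrableOn⟩
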